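/- (Gagliardo–Nirenberg sup-norm interpolation in ℝ³) There is a constant C > 0 such that for every u in the Schwartz space on ℝ³ (or every u ∈ H²(ℝ³)), ‖u‖_{L^∞(ℝ³)}² ≤ C·‖∇u‖_{L²(ℝ³)}·‖∇²u‖_{L²(ℝ³)}. -/

import Mathlib

open MeasureTheory

/-!
Let `d = k + l` be the dimension, `k < l`. Fourier inversion gives `‖u‖_∞ ≤ ‖𝓕 u‖_{L¹}`, and
Cauchy–Schwarz with the weight `w(ξ) = s² |ξ|²ᵏ + |ξ|²ˡ` bounds the square of this by
`∫ w⁻¹ · ∫ w |𝓕 u|²`. As `k + l = d`, the substitution `y = |ξ|^(l - k)` turns `∫ w⁻¹` into an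
arctangent integral, equal to a constant times `1 / s`. By Plancherel the second factor is at most a
constant times `s² ‖∇ᵏu‖² + ‖∇ˡu‖²`, and optimising in `s` leaves the product `‖∇ᵏu‖ ‖∇ˡu‖`.
For `u` with values in a real normed space, compose with a norming functional of `u x`.
-/

open Module Set Metric FourierTransform LineDeriv
open scoped Real SchwartzMap RealInnerProductSpace

section SquareIntegrable

variable {α F : Type*} [MeasurableSpace α] {μ : Measure α} [NormedAddCommGroup F]

theorem lpNorm_two_sq {f : α → F} (hf : AEStronglyMeasurable f μ) :
    lpNorm f 2 μ ^ 2 = ∫ x, ‖f x‖ ^ 2 ∂μ := by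
  have h := lpNorm_eq_integral_norm_rpow_toReal two_ne_zero ENNReal.ofNat_ne_top hf
  simp only [ENNReal.toReal_ofNat, Real.rpow_two, ← one_div, ← Real.sqrt_eq_rpow] at h
  rw [h, Real.sq_sqrt (by positivity)]

theorem memLp_two_of_integrable_of_bound {f : α → F} (hf : Integrable f μ) {C : ℝ}
    (hC : ∀ᵐ x ∂μ, ‖f x‖ ≤ C) : MemLp f 2 μ := by
  rw [memLp_two_iff_integrable_sq_norm hf.aestronglyMeasurable]
  simp only [sq]
  exact hf.norm.mul_bdd (c := C) hf.aestronglyMeasurable.norm (by simpa only [norm_norm] using hC)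

theorem sq_integral_norm_le_integral_inv_mul_integral_mul {f : α → F} {w : α → ℝ}
    (hf : AEStronglyMeasurable f μ) (hw : ∀ᵐ x ∂μ, 0 < w x)
    (hw_inv : Integrable (fun x ↦ (w x)⁻¹) μ) (hwf : Integrable (fun x ↦ w x * ‖f x‖ ^ 2) μ) :
    (∫ x, ‖f x‖ ∂μ) ^ 2 ≤ (∫ x, (w x)⁻¹ ∂μ) * ∫ x, w x * ‖f x‖ ^ 2 ∂μ := by
  have hw_meas : AEMeasurable w μ := by
    simpa [Pi.inv_def] using hw_inv.aemeasurable.inv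
  set p : α → ℝ := fun x ↦ √(w x)⁻¹
  set q : α → ℝ := fun x ↦ √(w x) * ‖f x‖
  have hp_sq : (fun x ↦ p x ^ 2) =ᵐ[μ] fun x ↦ (w x)⁻¹ := by
    filter_upwards [hw] with x hx
    exact Real.sq_sqrt (inv_nonneg.2 hx.le)
  have hq_sq : (fun x ↦ q x ^ 2) =ᵐ[μ] fun x ↦ w x * ‖f x‖ ^ 2 := by
    filter_upwards [hw] with x hx
    rw [mul_pow, Real.sq_sqrt hx.le]
  have hpq : (fun x ↦ ‖f x‖) =ᵐ[μ] fun x ↦ p x * q x := by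
    filter_upwards [hw] with x hx
    simp only [p, q, Real.sqrt_inv]
    rw [inv_mul_cancel_left₀ (Real.sqrt_ne_zero'.2 hx)]
  have hp : MemLp p 2 μ := (memLp_two_iff_integrable_sq
    hw_meas.inv.sqrt.aestronglyMeasurable).2 (hw_inv.congr hp_sq.symm)
  have hq : MemLp q 2 μ := (memLp_two_iff_integrable_sq
    (hw_meas.sqrt.aestronglyMeasurable.mul hf.norm)).2 (hwf.congr hq_sq.symm)
  have holder : ∫ x, p x * q x ∂μ ≤ √(∫ x, p x ^ 2 ∂μ) * √(∫ x, q x ^ 2 ∂μ) := by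
    simpa [Real.sqrt_eq_rpow] using integral_mul_le_Lp_mul_Lq_of_nonneg
      Real.HolderConjugate.two_two (.of_forall fun x ↦ by positivity)
      (.of_forall fun x ↦ by positivity) (by simpa using hp) (by simpa using hq)
  calc (∫ x, ‖f x‖ ∂μ) ^ 2
      ≤ (√(∫ x, p x ^ 2 ∂μ) * √(∫ x, q x ^ 2 ∂μ)) ^ 2 := by
        gcongr
        exact (integral_congr_ae hpq).trans_le holder
    _ = (∫ x, p x ^ 2 ∂μ) * ∫ x, q x ^ 2 ∂μ := by
        rw [mul_pow, Real.sq_sqrt (by positivity), Real.sq_sqrt (by positivity)]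
    _ = _ := by rw [integral_congr_ae hp_sq, integral_congr_ae hq_sq]

end SquareIntegrable

theorem le_two_mul_mul_of_forall_pos_le {a b y : ℝ} (ha : 0 ≤ a) (hb : 0 ≤ b)
    (h : ∀ s : ℝ, 0 < s → y ≤ s * a ^ 2 + b ^ 2 / s) : y ≤ 2 * a * b := by
  suffices y / 2 ≤ a * b by linarith
  refine le_mul_of_forall_lt₀ fun a' ha' b' hb' ↦ ?_
  have ha'_pos : 0 < a' := ha.trans_lt ha'
  have hb'_pos : 0 < b' := hb.trans_lt hb'
  suffices y ≤ 2 * (a' * b') by linarith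
  calc y ≤ b' / a' * a ^ 2 + b ^ 2 / (b' / a') := h _ (by positivity)
    _ ≤ b' / a' * a' ^ 2 + b' ^ 2 / (b' / a') := by gcongr
    _ = 2 * (a' * b') := by field_simp; ring

section RadialIntegral

theorem integrable_inv_sq_add_sq {s : ℝ} (hs : s ≠ 0) :
    Integrable fun x : ℝ ↦ (s ^ 2 + x ^ 2)⁻¹ := by
  convert! (integrable_inv_one_add_sq.comp_mul_left' (inv_ne_zero hs)).const_mul (s ^ 2)⁻¹ using 2
  field_simp

theorem integral_Ioi_inv_sq_add_sq {s : ℝ} (hs : 0 < s) :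
    ∫ x in Ioi (0 : ℝ), (s ^ 2 + x ^ 2)⁻¹ = π / (2 * s) := by
  have h (x : ℝ) : (s ^ 2 + x ^ 2)⁻¹ = (s ^ 2)⁻¹ * (1 + (s⁻¹ * x) ^ 2)⁻¹ := by field_simp
  simp_rw [h]
  rw [integral_const_mul, integral_comp_mul_left_Ioi (fun y ↦ (1 + y ^ 2)⁻¹) 0 (inv_pos.2 hs),
    mul_zero, integral_Ioi_inv_one_add_sq, Real.arctan_zero, sub_zero, inv_inv, smul_eq_mul]
  field_simp

variable {F : Type*} [NormedAddCommGroup F] [NormedSpace ℝ F]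

theorem integrableOn_Ioi_pow_smul_comp_pow_iff (g : ℝ → F) (m : ℕ) :
    IntegrableOn (fun x : ℝ ↦ x ^ m • g (x ^ (m + 1))) (Ioi 0) ↔ IntegrableOn g (Ioi 0) := by
  have h := integrableOn_Ioi_comp_rpow_iff' g (p := (m + 1 : ℕ)) (by positivity)
  simp only [Real.rpow_natCast, Nat.cast_succ, add_sub_cancel_right] at h
  exact_mod_cast h

theorem integral_Ioi_pow_smul_comp_pow (g : ℝ → F) (m : ℕ) :
    ∫ x in Ioi (0 : ℝ), x ^ m • g (x ^ (m + 1)) = (m + 1 : ℝ)⁻¹ • ∫ y in Ioi 0, g y := by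
  have h := integral_comp_rpow_Ioi_of_pos (g := g) (p := (m + 1 : ℕ)) (by positivity)
  simp only [Nat.cast_succ, add_sub_cancel_right, Real.rpow_natCast, mul_smul, integral_smul] at h
  rw [← h, inv_smul_smul₀ (by positivity)]
  exact_mod_cast rfl

theorem eqOn_pow_smul_inv_sq_mul_pow_add_pow (k m : ℕ) (s : ℝ) :
    EqOn (fun r ↦ r ^ (k + (k + m + 1) - 1) • (s ^ 2 * r ^ (2 * k) + r ^ (2 * (k + m + 1)))⁻¹)
      (fun r ↦ r ^ m • (s ^ 2 + (r ^ (m + 1)) ^ 2)⁻¹) (Ioi 0) := by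
  intro r (hr : 0 < r)
  have factor : s ^ 2 * r ^ (2 * k) + r ^ (2 * (k + m + 1)) =
      r ^ (2 * k) * (s ^ 2 + (r ^ (m + 1)) ^ 2) := by ring
  have exponent : k + (k + m + 1) - 1 = 2 * k + m := by lia
  simp only [factor, exponent, pow_add r (2 * k) m, mul_inv, smul_eq_mul]
  field_simp

variable {E : Type*} [NormedAddCommGroup E] [NormedSpace ℝ E] [FiniteDimensional ℝ E]
  [MeasurableSpace E] [BorelSpace E] (μ : Measure E) [μ.IsAddHaarMeasure] {k l : ℕ} {s : ℝ}

theorem integrable_inv_sq_mul_norm_pow_add_norm_pow (hkl : k < l) (hE : finrank ℝ E = k + l)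
    (hs : s ≠ 0) : Integrable (fun ξ : E ↦ (s ^ 2 * ‖ξ‖ ^ (2 * k) + ‖ξ‖ ^ (2 * l))⁻¹) μ := by
  obtain ⟨m, rfl⟩ := Nat.exists_eq_add_of_lt hkl
  have : Nontrivial E := nontrivial_of_finrank_pos (R := ℝ) (by lia)
  rw [integrable_fun_norm_addHaar μ
    (f := fun r ↦ (s ^ 2 * r ^ (2 * k) + r ^ (2 * (k + m + 1)))⁻¹), hE,
    integrableOn_congr_fun (eqOn_pow_smul_inv_sq_mul_pow_add_pow k m s) measurableSet_Ioi,
    integrableOn_Ioi_pow_smul_comp_pow_iff fun y ↦ (s ^ 2 + y ^ 2)⁻¹]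
  exact (integrable_inv_sq_add_sq hs).integrableOn

theorem integral_inv_sq_mul_norm_pow_add_norm_pow (hkl : k < l) (hE : finrank ℝ E = k + l)
    (hs : 0 < s) :
    ∫ ξ : E, (s ^ 2 * ‖ξ‖ ^ (2 * k) + ‖ξ‖ ^ (2 * l))⁻¹ ∂μ =
      finrank ℝ E * μ.real (ball 0 1) * π / (2 * (l - k) * s) := by
  obtain ⟨m, rfl⟩ := Nat.exists_eq_add_of_lt hkl
  have : Nontrivial E := nontrivial_of_finrank_pos (R := ℝ) (by lia)
  have radial : ∫ r in Ioi (0 : ℝ), r ^ (finrank ℝ E - 1) •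
      (s ^ 2 * r ^ (2 * k) + r ^ (2 * (k + m + 1)))⁻¹ = (m + 1 : ℝ)⁻¹ • (π / (2 * s)) := by
    rw [hE, setIntegral_congr_fun measurableSet_Ioi
        (eqOn_pow_smul_inv_sq_mul_pow_add_pow k m s),
      integral_Ioi_pow_smul_comp_pow fun y ↦ (s ^ 2 + y ^ 2)⁻¹, integral_Ioi_inv_sq_add_sq hs]
  rw [integral_fun_norm_addHaar μ fun r ↦ (s ^ 2 * r ^ (2 * k) + r ^ (2 * (k + m + 1)))⁻¹, radial]
  have gap : ((k + m + 1 : ℕ) - k : ℝ) = m + 1 := by push_cast; ring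
  rw [gap, nsmul_eq_mul, smul_eq_mul, smul_eq_mul]
  field_simp

end RadialIntegral

section SchwartzMemLp

variable {E F : Type*} [NormedAddCommGroup E] [NormedSpace ℝ E] [MeasurableSpace E] [BorelSpace E]
  [SecondCountableTopology E] [NormedAddCommGroup F] [NormedSpace ℝ F] (μ : Measure E)
  [μ.HasTemperateGrowth]

theorem memLp_two_iteratedFDeriv (f : 𝓢(E, F)) (n : ℕ) :
    MemLp (iteratedFDeriv ℝ n f) 2 μ := by
  have integrable : Integrable (iteratedFDeriv ℝ n f) μ := by
    rw [← integrable_norm_iff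
      ((f.smooth ⊤).continuous_iteratedFDeriv (mod_cast le_top)).aestronglyMeasurable]
    simpa only [pow_zero, one_mul] using f.integrable_pow_mul_iteratedFDeriv μ 0 n
  exact memLp_two_of_integrable_of_bound integrable
    (.of_forall (f.norm_iteratedFDeriv_le_seminorm ℝ n))

theorem memLp_two_norm_pow_smul (f : 𝓢(E, F)) (n : ℕ) :
    MemLp (fun x ↦ ‖x‖ ^ n • f x) 2 μ := by
  have norm_eq (x : E) : ‖‖x‖ ^ n • f x‖ = ‖x‖ ^ n * ‖f x‖ := by simp [norm_smul]
  have integrable : Integrable (fun x ↦ ‖x‖ ^ n • f x) μ := by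
    rw [← integrable_norm_iff (by fun_prop)]
    simpa only [norm_eq] using f.integrable_pow_mul μ n
  exact memLp_two_of_integrable_of_bound integrable
    (.of_forall fun x ↦ (norm_eq x).trans_le (f.norm_pow_mul_le_seminorm ℝ n x))

end SchwartzMemLp

section Fourier

variable {E F : Type*} [NormedAddCommGroup E] [InnerProductSpace ℝ E] [FiniteDimensional ℝ E]
  [MeasurableSpace E] [BorelSpace E] [NormedAddCommGroup F] [NormedSpace ℂ F]

theorem norm_apply_le_integral_norm_fourier [CompleteSpace F] (f : 𝓢(E, F)) (x : E) :
    ‖f x‖ ≤ ∫ ξ, ‖𝓕 f ξ‖ := by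
  calc ‖f x‖ = ‖𝓕⁻ (⇑(𝓕 f : 𝓢(E, F))) x‖ := by
        rw [← SchwartzMap.fourierInv_coe, FourierTransform.fourierInv_fourier_eq]
    _ ≤ ∫ ξ, ‖Real.fourierChar (inner ℝ ξ x) • 𝓕 f ξ‖ := by
        rw [Real.fourierInv_eq]
        exact norm_integral_le_integral_norm _
    _ = ∫ ξ, ‖𝓕 f ξ‖ := by simp only [Circle.norm_smul]

theorem norm_fourier_lineDerivOp (f : 𝓢(E, F)) (m ξ : E) :
    ‖𝓕 (∂_{m} f) ξ‖ = 2 * π * |⟪ξ, m⟫| * ‖𝓕 f ξ‖ := by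
  have growth : (fun ξ : E ↦ ⟪ξ, m⟫).HasTemperateGrowth := by fun_prop
  rw [SchwartzMap.fourier_lineDerivOp_eq, smul_apply,
    SchwartzMap.smulLeftCLM_apply_apply growth, norm_smul, norm_smul]
  simp [abs_of_pos Real.pi_pos, mul_assoc]

theorem norm_fourier_iteratedLineDerivOp (f : 𝓢(E, F)) {n : ℕ} (m : Fin n → E) (ξ : E) :
    ‖𝓕 (∂^{m} f) ξ‖ = (2 * π) ^ n * (∏ i, |⟪ξ, m i⟫|) * ‖𝓕 f ξ‖ := by
  induction n with
  | zero => simp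
  | succ n ih =>
    rw [iteratedLineDerivOp_succ_left, norm_fourier_lineDerivOp, ih, Fin.prod_univ_succ]
    simp only [Fin.tail]
    ring

theorem sum_norm_fourier_iteratedLineDerivOp_sq {ι : Type*} [Fintype ι]
    (b : OrthonormalBasis ι ℝ E) (f : 𝓢(E, F)) (n : ℕ) (ξ : E) :
    ∑ m : Fin n → ι, ‖𝓕 (∂^{b ∘ m} f) ξ‖ ^ 2 =
      ((2 * π) ^ n) ^ 2 * (‖ξ‖ ^ (2 * n) * ‖𝓕 f ξ‖ ^ 2) := by
  have parseval : ∑ m : Fin n → ι, ∏ i, ⟪ξ, b (m i)⟫ ^ 2 = ‖ξ‖ ^ (2 * n) := by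
    rw [← Fintype.sum_pow (fun i ↦ ⟪ξ, b i⟫ ^ 2), b.sum_sq_inner_left, pow_mul]
  simp only [norm_fourier_iteratedLineDerivOp, Function.comp_apply, mul_pow, ← Finset.prod_pow,
    sq_abs, ← Finset.sum_mul, ← Finset.mul_sum, parseval, mul_assoc]

/-- The homogeneous Sobolev seminorm of order `n`, that is the `L²` norm of `‖ξ‖ⁿ 𝓕 f ξ`. As in
Mathlib the Fourier transform has the kernel `exp (-2πi⟪x, ξ⟫)`, and no power of `2π` is added to
the weight. -/
noncomputable def homSobolevNorm (n : ℕ) (f : 𝓢(E, F)) : ℝ :=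
  lpNorm (fun ξ ↦ ‖ξ‖ ^ n • 𝓕 f ξ) 2 volume

theorem homSobolevNorm_nonneg (n : ℕ) (f : 𝓢(E, F)) : 0 ≤ homSobolevNorm n f :=
  lpNorm_nonneg

theorem integrable_norm_pow_mul_norm_fourier_sq (n : ℕ) (f : 𝓢(E, F)) :
    Integrable fun ξ ↦ ‖ξ‖ ^ (2 * n) * ‖𝓕 f ξ‖ ^ 2 := by
  refine ((memLp_two_norm_pow_smul volume (𝓕 f) n).integrable_norm_pow two_ne_zero).congr
    (.of_forall fun ξ ↦ ?_)
  simp [norm_smul, mul_pow, pow_mul']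

theorem homSobolevNorm_sq (n : ℕ) (f : 𝓢(E, F)) :
    homSobolevNorm n f ^ 2 = ∫ ξ, ‖ξ‖ ^ (2 * n) * ‖𝓕 f ξ‖ ^ 2 := by
  rw [homSobolevNorm, lpNorm_two_sq (memLp_two_norm_pow_smul volume (𝓕 f) n).aestronglyMeasurable]
  simp [norm_smul, mul_pow, pow_mul']

end Fourier

section Plancherel

variable {E F : Type*} [NormedAddCommGroup E] [InnerProductSpace ℝ E] [FiniteDimensional ℝ E]
  [MeasurableSpace E] [BorelSpace E] [NormedAddCommGroup F] [InnerProductSpace ℂ F]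
  [CompleteSpace F]

theorem sum_integral_norm_iteratedLineDerivOp_sq {ι : Type*} [Fintype ι]
    (b : OrthonormalBasis ι ℝ E) (n : ℕ) (f : 𝓢(E, F)) :
    ∑ m : Fin n → ι, ∫ x, ‖(∂^{b ∘ m} f) x‖ ^ 2 = ((2 * π) ^ n * homSobolevNorm n f) ^ 2 := by
  simp_rw [← SchwartzMap.integral_norm_sq_fourier (∂^{b ∘ _} f)]
  rw [← integral_finsetSum _ fun m _ ↦
    ((𝓕 (∂^{b ∘ m} f)).memLp 2 volume).integrable_norm_pow two_ne_zero]
  simp_rw [sum_norm_fourier_iteratedLineDerivOp_sq]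
  rw [integral_const_mul, ← homSobolevNorm_sq, ← mul_pow]

theorem homSobolevNorm_le (n : ℕ) (f : 𝓢(E, F)) :
    homSobolevNorm n f ≤
      (√(finrank ℝ E) / (2 * π)) ^ n * lpNorm (iteratedFDeriv ℝ n f) 2 volume := by
  set b := stdOrthonormalBasis ℝ E
  have memLp := memLp_two_iteratedFDeriv volume f n
  have pointwise (m : Fin n → Fin (finrank ℝ E)) (x : E) :
      ‖(∂^{b ∘ m} f) x‖ ≤ ‖iteratedFDeriv ℝ n f x‖ := by
    rw [SchwartzMap.iteratedLineDerivOp_eq_iteratedFDeriv]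
    simpa using (iteratedFDeriv ℝ n f x).le_opNorm (b ∘ m)
  have word (m : Fin n → Fin (finrank ℝ E)) :
      ∫ x, ‖(∂^{b ∘ m} f) x‖ ^ 2 ≤ lpNorm (iteratedFDeriv ℝ n f) 2 volume ^ 2 := by
    rw [lpNorm_two_sq memLp.aestronglyMeasurable]
    exact integral_mono (((∂^{b ∘ m} f).memLp 2 volume).integrable_norm_pow two_ne_zero)
      (memLp.integrable_norm_pow two_ne_zero) fun x ↦ by gcongr; exact pointwise m x
  have sq_le : ((2 * π) ^ n * homSobolevNorm n f) ^ 2 ≤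
      (√(finrank ℝ E) ^ n * lpNorm (iteratedFDeriv ℝ n f) 2 volume) ^ 2 := by
    calc ((2 * π) ^ n * homSobolevNorm n f) ^ 2
        = ∑ m : Fin n → Fin (finrank ℝ E), ∫ x, ‖(∂^{b ∘ m} f) x‖ ^ 2 :=
          (sum_integral_norm_iteratedLineDerivOp_sq b n f).symm
      _ ≤ ∑ m : Fin n → Fin (finrank ℝ E), lpNorm (iteratedFDeriv ℝ n f) 2 volume ^ 2 := by
          gcongr with m
          exact word m
      _ = (√(finrank ℝ E) ^ n * lpNorm (iteratedFDeriv ℝ n f) 2 volume) ^ 2 := by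
          simp [mul_pow, pow_right_comm _ n 2]
  rw [div_pow, div_mul_eq_mul_div, le_div_iff₀' (by positivity)]
  exact le_of_sq_le_sq sq_le (mul_nonneg (by positivity) lpNorm_nonneg)

end Plancherel

section NormingFunctional

variable {E F : Type*} [NormedAddCommGroup E] [NormedSpace ℝ E] [NormedAddCommGroup F]
  [NormedSpace ℝ F]

theorem exists_complex_norm_eq_norm_iteratedFDeriv_le (u : 𝓢(E, F)) (x : E) :
    ∃ v : 𝓢(E, ℂ), ‖v x‖ = ‖u x‖ ∧
      ∀ n y, ‖iteratedFDeriv ℝ n v y‖ ≤ ‖iteratedFDeriv ℝ n u y‖ := by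
  obtain ⟨g, g_norm_le, g_apply⟩ := exists_dual_vector'' ℝ (u x)
  set L : F →L[ℝ] ℂ := Complex.ofRealCLM ∘L g
  have L_norm_le : ‖L‖ ≤ 1 := by
    calc ‖L‖ ≤ ‖Complex.ofRealCLM‖ * ‖g‖ := ContinuousLinearMap.opNorm_comp_le _ _
      _ ≤ 1 := by simpa using g_norm_le
  refine ⟨u.postcompCLM L, by simp [L, g_apply], fun n y ↦ ?_⟩
  calc ‖iteratedFDeriv ℝ n (L ∘ u) y‖ ≤ ‖L‖ * ‖iteratedFDeriv ℝ n u y‖ :=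
        L.norm_iteratedFDeriv_comp_left (u.smooth ⊤).contDiffAt (mod_cast le_top)
    _ ≤ ‖iteratedFDeriv ℝ n u y‖ := mul_le_of_le_one_left (norm_nonneg _) L_norm_le

end NormingFunctional

section Agmon

variable {E : Type*} [NormedAddCommGroup E] [InnerProductSpace ℝ E] [FiniteDimensional ℝ E]
  [MeasurableSpace E] [BorelSpace E] {k l : ℕ}

variable (E k l) in
/-- The constant in Agmon's inequality
`‖f x‖ ^ 2 ≤ agmonConst E k l * (homSobolevNorm k f * homSobolevNorm l f)`, for `k < l` with
`k + l = finrank ℝ E`. -/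
noncomputable def agmonConst : ℝ :=
  finrank ℝ E * volume.real (ball (0 : E) 1) * π / (l - k)

theorem agmonConst_pos [Nontrivial E] (hkl : k < l) : 0 < agmonConst E k l := by
  have dim_pos : (0 : ℝ) < finrank ℝ E := mod_cast finrank_pos
  have ball_pos : 0 < volume.real (ball (0 : E) 1) :=
    ENNReal.toReal_pos (measure_ball_pos _ _ one_pos).ne' measure_ball_lt_top.ne
  have gap_pos : (0 : ℝ) < l - k := sub_pos.2 (mod_cast hkl)
  unfold agmonConst
  positivity

variable {F : Type*} [NormedAddCommGroup F] [NormedSpace ℂ F] [CompleteSpace F]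

theorem norm_sq_le_agmonConst_div_mul_add (hkl : k < l) (hE : finrank ℝ E = k + l) {s : ℝ}
    (hs : 0 < s) (f : 𝓢(E, F)) (x : E) :
    ‖f x‖ ^ 2 ≤ agmonConst E k l / (2 * s) *
      (s ^ 2 * homSobolevNorm k f ^ 2 + homSobolevNorm l f ^ 2) := by
  have weight_pos : ∀ᵐ ξ : E, 0 < s ^ 2 * ‖ξ‖ ^ (2 * k) + ‖ξ‖ ^ (2 * l) := by
    have : Nontrivial E := nontrivial_of_finrank_pos (R := ℝ) (by lia)
    filter_upwards [Measure.ae_ne volume 0] with ξ hξ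
    have := norm_pos_iff.2 hξ
    positivity
  have int_k := (integrable_norm_pow_mul_norm_fourier_sq k f).const_mul (s ^ 2)
  have int_l := integrable_norm_pow_mul_norm_fourier_sq l f
  have cauchy_schwarz := sq_integral_norm_le_integral_inv_mul_integral_mul
    (𝓕 f).integrable.aestronglyMeasurable weight_pos
    (integrable_inv_sq_mul_norm_pow_add_norm_pow volume hkl hE hs.ne')
    (by simpa only [add_mul, mul_assoc, Pi.add_def] using int_k.add int_l)
  simp only [add_mul, mul_assoc (s ^ 2)] at cauchy_schwarz
  calc ‖f x‖ ^ 2 ≤ (∫ ξ, ‖𝓕 f ξ‖) ^ 2 := by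
        gcongr
        exact norm_apply_le_integral_norm_fourier f x
    _ ≤ (∫ ξ : E, (s ^ 2 * ‖ξ‖ ^ (2 * k) + ‖ξ‖ ^ (2 * l))⁻¹) *
        ∫ ξ, s ^ 2 * (‖ξ‖ ^ (2 * k) * ‖𝓕 f ξ‖ ^ 2) + ‖ξ‖ ^ (2 * l) * ‖𝓕 f ξ‖ ^ 2 :=
      cauchy_schwarz
    _ = agmonConst E k l / (2 * s) *
        (s ^ 2 * homSobolevNorm k f ^ 2 + homSobolevNorm l f ^ 2) := by
      rw [integral_inv_sq_mul_norm_pow_add_norm_pow volume hkl hE hs, integral_add int_k int_l,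
        integral_const_mul, ← homSobolevNorm_sq, ← homSobolevNorm_sq, agmonConst, div_div]
      congr 2
      ring

theorem norm_sq_le_agmonConst_mul_homSobolevNorm (hkl : k < l) (hE : finrank ℝ E = k + l)
    (f : 𝓢(E, F)) (x : E) :
    ‖f x‖ ^ 2 ≤ agmonConst E k l * (homSobolevNorm k f * homSobolevNorm l f) := by
  have : Nontrivial E := nontrivial_of_finrank_pos (R := ℝ) (by lia)
  have const_pos : 0 < agmonConst E k l := agmonConst_pos hkl
  suffices ‖f x‖ ^ 2 / (agmonConst E k l / 2) ≤ 2 * homSobolevNorm k f * homSobolevNorm l f by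
    rw [div_le_iff₀ (by positivity)] at this
    linarith
  refine le_two_mul_mul_of_forall_pos_le (homSobolevNorm_nonneg k f) (homSobolevNorm_nonneg l f)
    fun s hs ↦ ?_
  rw [div_le_iff₀ (by positivity)]
  convert! norm_sq_le_agmonConst_div_mul_add hkl hE hs f x using 1
  field_simp

end Agmon

theorem stmt_4_general {E F : Type*} [NormedAddCommGroup E] [InnerProductSpace ℝ E]
    [FiniteDimensional ℝ E] [MeasurableSpace E] [BorelSpace E] [NormedAddCommGroup F]
    [NormedSpace ℝ F] {k l : ℕ} (hkl : k < l) (hE : finrank ℝ E = k + l) (u : 𝓢(E, F)) (x : E) :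
    ‖u x‖ ^ 2 ≤ agmonConst E k l * (√(finrank ℝ E) / (2 * π)) ^ (k + l) *
      (eLpNorm (fun y ↦ ‖iteratedFDeriv ℝ k u y‖) 2 volume).toReal *
      (eLpNorm (fun y ↦ ‖iteratedFDeriv ℝ l u y‖) 2 volume).toReal := by
  obtain ⟨v, v_apply, v_deriv⟩ := exists_complex_norm_eq_norm_iteratedFDeriv_le u x
  have : Nontrivial E := nontrivial_of_finrank_pos (R := ℝ) (by lia)
  set c := √(finrank ℝ E) / (2 * π)
  set A : ℕ → ℝ := fun n ↦ (eLpNorm (fun y ↦ ‖iteratedFDeriv ℝ n u y‖) 2 volume).toReal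
  have seminorm_le (n : ℕ) : homSobolevNorm n v ≤ c ^ n * A n := by
    have memLp := (memLp_two_iteratedFDeriv volume u n).norm
    refine (homSobolevNorm_le n v).trans ?_
    gcongr
    exact (lpNorm_mono_real memLp (v_deriv n)).trans_eq
      (toReal_eLpNorm memLp.aestronglyMeasurable).symm
  calc ‖u x‖ ^ 2 = ‖v x‖ ^ 2 := by rw [v_apply]
    _ ≤ agmonConst E k l * (homSobolevNorm k v * homSobolevNorm l v) :=
        norm_sq_le_agmonConst_mul_homSobolevNorm hkl hE v x
    _ ≤ agmonConst E k l * ((c ^ k * A k) * (c ^ l * A l)) := by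
        gcongr
        · exact (agmonConst_pos hkl).le
        · exact homSobolevNorm_nonneg l v
        · exact seminorm_le k
        · exact seminorm_le l
    _ = agmonConst E k l * c ^ (k + l) * A k * A l := by ring

theorem stmt_4 :
    ∃ C : ℝ, 0 < C ∧
      ∀ u : SchwartzMap (EuclideanSpace ℝ (Fin 3)) ℝ, ∀ x,
        |u x| ^ 2 ≤
          C * (eLpNorm (fun y => ‖fderiv ℝ (⇑u) y‖) 2 volume).toReal *
            (eLpNorm (fun y => ‖iteratedFDeriv ℝ 2 (⇑u) y‖) 2 volume).toReal := by
  refine ⟨agmonConst (EuclideanSpace ℝ (Fin 3)) 1 2 * (√3 / (2 * π)) ^ 3,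
    mul_pos (agmonConst_pos one_lt_two) (by positivity), fun u x ↦ ?_⟩
  simpa [norm_iteratedFDeriv_one] using stmt_4_general one_lt_two (by simp) u x
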